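/- arXiv:1408.4312 — 3 statements merged into one kernel-verified Lean document; each statement's English description precedes it below -/
import Mathlib

section
/- Let G be a group and let u ⊆ G be a minimal generating set. If a, b ∈ u with a ≠ b, then the product ab does not belong to u ∪ u⁻¹ ∪ {1}. (This is the key combinatorial step in the proof that for a minimal generating set, S(u) fails to be a subalgebra of the group algebra when |u| > 1.) -/
/- Deleting either factor from `u` leaves a set whose closure misses `a * b`, because it contains
the other factor and, by irredundancy, not the deleted one. As `a ≠ b`, every element of `u`
survives one of the two deletions, so the two closures together cover `u ∪ u⁻¹ ∪ {1}`. -/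

section Irredundant

variable {G : Type*} [Group G] {u : Set G} {a b : G}

/-- A subset of a group is irredundant if none of its elements lies in the subgroup generated by
the others, that is, if it is a minimal generating set of its own closure. -/
def IsIrredundant (u : Set G) : Prop :=
  ∀ x ∈ u, x ∉ Subgroup.closure (u \ {x})

theorem IsIrredundant.of_forall_ssubset_closure_ne
    (hmin : ∀ v ⊂ u, Subgroup.closure v ≠ Subgroup.closure u) : IsIrredundant u := by
  intro x hx hmem
  have hsub : u ⊆ Subgroup.closure (u \ {x}) := calc
    u ⊆ insert x (u \ {x}) := Set.subset_insert_sdiff_singleton x u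
    _ ⊆ Subgroup.closure (u \ {x}) := Set.insert_subset hmem Subgroup.subset_closure
  exact hmin (u \ {x}) (Set.sdiff_singleton_ssubset.2 hx)
    (le_antisymm (Subgroup.closure_mono Set.sdiff_subset) ((Subgroup.closure_le _).2 hsub))

theorem union_inv_union_one_subset_closure_sdiff_union (u : Set G) (hab : a ≠ b) :
    u ∪ u⁻¹ ∪ {1} ⊆ (Subgroup.closure (u \ {a}) ∪ Subgroup.closure (u \ {b}) : Set G) := by
  have hu : u ⊆ (Subgroup.closure (u \ {a}) ∪ Subgroup.closure (u \ {b}) : Set G) := by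
    intro c hc
    obtain hca | rfl := ne_or_eq c a
    · exact .inl (Subgroup.subset_closure ⟨hc, hca⟩)
    · exact .inr (Subgroup.subset_closure ⟨hc, hab⟩)
  have hinv : u⁻¹ ⊆ (Subgroup.closure (u \ {a}) ∪ Subgroup.closure (u \ {b}) : Set G) := by
    simpa only [Set.union_inv, inv_coe_set] using Set.inv_subset_inv.2 hu
  exact Set.union_subset (Set.union_subset hu hinv)
    (Set.singleton_subset_iff.2 (.inl (one_mem _)))

theorem product_not_in_union_of_minimal_generating_set_general (hu : IsIrredundant u)
    (ha : a ∈ u) (hb : b ∈ u) (hab : a ≠ b) : a * b ∉ u ∪ u⁻¹ ∪ {1} := by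
  have hb' : b ∈ Subgroup.closure (u \ {a}) := Subgroup.subset_closure ⟨hb, hab.symm⟩
  have ha' : a ∈ Subgroup.closure (u \ {b}) := Subgroup.subset_closure ⟨ha, hab⟩
  have hleft : a * b ∉ Subgroup.closure (u \ {a}) :=
    mt (Subgroup.mul_mem_cancel_right _ hb').1 (hu a ha)
  have hright : a * b ∉ Subgroup.closure (u \ {b}) :=
    mt (Subgroup.mul_mem_cancel_left _ ha').1 (hu b hb)
  intro hmem
  exact (union_inv_union_one_subset_closure_sdiff_union u hab hmem).elim hleft hright

end Irredundant

/-- If `u` is a minimal generating set of a group `G` and `a, b ∈ u` are distinct,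
then `a * b ∉ u ∪ u⁻¹ ∪ {1}`. -/
theorem product_not_in_union_of_minimal_generating_set
    {G : Type*} [Group G] (u : Set G)
    (hgen : Subgroup.closure u = ⊤)
    (hmin : ∀ v : Set G, v ⊂ u → Subgroup.closure v ≠ ⊤)
    {a b : G} (ha : a ∈ u) (hb : b ∈ u) (hab : a ≠ b) :
    a * b ∉ u ∪ u⁻¹ ∪ {1} :=
  product_not_in_union_of_minimal_generating_set_general
    (.of_forall_ssubset_closure_ne fun v hv => hgen ▸ hmin v hv) ha hb hab
end

section
/- Let G be a group, let u ⊆ G be a minimal generating set, and let a, b ∈ u with a ≠ b. Then the image of ab in the group algebra ℂ[G] does not lie in the ℂ-linear span S(u) of the images of the elements of {1} ∪ u ∪ u⁻¹. (In the paper this is phrased as: the set {ab} ∪ u ∪ u⁻¹ ∪ {e} is linearly independent in C*(G), so ab ∉ S(u).) -/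
/-!
If `a`, `b` are distinct elements of a minimal generating set `u`, then `a * b` is not a power of
any `c ∈ u`. Since `c` cannot equal both `a` and `b`, one of the two factors differs from `c`; it is
then a word in `c` and the other factor, so it lies in the subgroup generated by the remaining
elements of `u`, against minimality. As the group elements are a basis of the group algebra, `a * b`
is not in the span of the powers of the generators either.
-/

/-- A subset of a group is independent if none of its elements lies in the subgroup generated by
the others. This is the part of the notion of a minimal generating set that does not mention the
ambient group. -/
def IsGroupIndependent {G : Type*} [Group G] (u : Set G) : Prop :=
  ∀ x ∈ u, x ∉ Subgroup.closure (u \ {x})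

section

variable {G : Type*} [Group G] {u : Set G} {a b c : G}

theorem subgroup_closure_sdiff_singleton_eq (h : a ∈ Subgroup.closure (u \ {a})) :
    Subgroup.closure (u \ {a}) = Subgroup.closure u := by
  refine (Subgroup.closure_mono Set.sdiff_subset).antisymm ((Subgroup.closure_le _).2 fun y hy ↦ ?_)
  obtain rfl | hya := eq_or_ne y a
  · exact h
  · exact Subgroup.subset_closure ⟨hy, hya⟩

namespace IsGroupIndependent

theorem of_forall_ssubset_closure_ne
    (hmin : ∀ v ⊂ u, Subgroup.closure v ≠ Subgroup.closure u) : IsGroupIndependent u :=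
  fun x hx hmem ↦
    hmin (u \ {x}) (Set.sdiff_singleton_ssubset.2 hx) (subgroup_closure_sdiff_singleton_eq hmem)

theorem mul_notMem_zpowers (hu : IsGroupIndependent u) (ha : a ∈ u) (hb : b ∈ u) (hab : a ≠ b)
    (hc : c ∈ u) : a * b ∉ Subgroup.zpowers c := by
  intro hmem
  have mul_mem_of_ne {x : G} (hcx : c ≠ x) : a * b ∈ Subgroup.closure (u \ {x}) := by
    have hc_mem : c ∈ Subgroup.closure (u \ {x}) := Subgroup.subset_closure ⟨hc, hcx⟩
    exact Subgroup.zpowers_le_of_mem hc_mem hmem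
  obtain rfl | hca := eq_or_ne c a
  · have hc_mem : c ∈ Subgroup.closure (u \ {b}) := Subgroup.subset_closure ⟨ha, hab⟩
    exact hu b hb ((Subgroup.mul_mem_cancel_left _ hc_mem).1 (mul_mem_of_ne hab))
  · have hb_mem : b ∈ Subgroup.closure (u \ {a}) := Subgroup.subset_closure ⟨hb, hab.symm⟩
    exact hu a ha ((Subgroup.mul_mem_cancel_right _ hb_mem).1 (mul_mem_of_ne hca))

end IsGroupIndependent

theorem one_union_union_inv_subset_iUnion_zpowers (hu : u.Nonempty) :
    {1} ∪ u ∪ u⁻¹ ⊆ ⋃ c ∈ u, (Subgroup.zpowers c : Set G) := by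
  rintro x ((rfl | hx) | hx)
  · obtain ⟨c, hc⟩ := hu
    exact Set.mem_biUnion hc (one_mem _)
  · exact Set.mem_biUnion hx (Subgroup.mem_zpowers x)
  · exact Set.mem_biUnion hx (inv_mem_iff.1 (Subgroup.mem_zpowers x⁻¹))

theorem product_not_in_span_of_minimal_generating_set_general {R : Type*} [Semiring R]
    [Nontrivial R] (hu : IsGroupIndependent u) (ha : a ∈ u) (hb : b ∈ u) (hab : a ≠ b) :
    MonoidAlgebra.of R G (a * b) ∉
      Submodule.span R (MonoidAlgebra.of R G '' ⋃ c ∈ u, (Subgroup.zpowers c : Set G)) := by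
  rw [MonoidAlgebra.of_mem_span_of_iff, Set.mem_iUnion₂]
  rintro ⟨c, hc, hmem⟩
  exact hu.mul_notMem_zpowers ha hb hab hc hmem

end

/-- If `u` is a minimal generating set of a group `G` and `a, b ∈ u` are distinct, then
the image of `a * b` in the group algebra `ℂ[G]` does not lie in the `ℂ`-linear span
`S(u)` of the images of the elements of `{1} ∪ u ∪ u⁻¹`. -/
theorem product_not_in_span_of_minimal_generating_set
    {G : Type*} [Group G] (u : Set G)
    (hgen : Subgroup.closure u = ⊤)
    (hmin : ∀ v : Set G, v ⊂ u → Subgroup.closure v ≠ ⊤)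
    {a b : G} (ha : a ∈ u) (hb : b ∈ u) (hab : a ≠ b) :
    (MonoidAlgebra.of ℂ G) (a * b) ∉
      Submodule.span ℂ ((MonoidAlgebra.of ℂ G) '' ({1} ∪ u ∪ u⁻¹)) :=
  have hu : IsGroupIndependent u := .of_forall_ssubset_closure_ne (hgen ▸ hmin)
  fun h ↦ product_not_in_span_of_minimal_generating_set_general hu ha hb hab <|
    Submodule.span_mono (Set.image_mono (one_union_union_inv_subset_iUnion_zpowers ⟨a, ha⟩)) h
end

section
/- Let G be a group and let u ⊆ G be a minimal generating set. Then u ∪ u⁻¹ ∪ {1} = G if and only if G is finite of order at most 3. (This is the group-theoretic core of Theorem 5.3(ii): for a minimal generating set u of a finitely generated discrete group G, the operator system S(u) is (min, max)-nuclear if and only if |G| ≤ 3.) -/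
/-!
For `a` in a minimal generating set `u`, the subgroup `Hₐ` generated by `u \ {a}` does not
contain `a`. If `a ≠ b` in `u`, then `a * b` lies in neither `Hₐ` nor `H_b`, whereas every element
of `u ∪ u⁻¹ ∪ {1}` lies in all of these subgroups except at most one. So `u ∪ u⁻¹ ∪ {1} = G` forces
`u` to have at most one element, and then `G` has at most three. Conversely, if `|G| ≤ 3`, any
`a ≠ 1` in `u` already gives `{a, a⁻¹, 1} = G`: for `g` outside this set, `1`, `a`, `g` and `a * g`
would be four distinct elements.
-/

section

variable {G : Type*} [Group G] {u : Set G} {a b : G}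

theorem notMem_closure_sdiff_singleton_of_minimal {H : Subgroup G}
    (hu : Minimal (Subgroup.closure · = H) u) (ha : a ∈ u) : a ∉ Subgroup.closure (u \ {a}) := by
  intro hmem
  refine hu.not_prop_of_lt (Set.sdiff_singleton_ssubset.2 ha) (Eq.trans ?_ hu.prop)
  have hsub : u ⊆ Subgroup.closure (u \ {a}) := by
    intro x hx
    obtain rfl | hxa := eq_or_ne x a
    · exact hmem
    · exact Subgroup.subset_closure ⟨hx, hxa⟩
  exact le_antisymm (Subgroup.closure_mono Set.sdiff_subset) ((Subgroup.closure_le _).2 hsub)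

theorem mem_closure_sdiff_singleton_or {x : G} (hab : a ≠ b) (hx : x ∈ u ∪ u⁻¹ ∪ {1}) :
    x ∈ Subgroup.closure (u \ {a}) ∨ x ∈ Subgroup.closure (u \ {b}) := by
  have mem_or {y : G} (hy : y ∈ u) :
      y ∈ Subgroup.closure (u \ {a}) ∨ y ∈ Subgroup.closure (u \ {b}) := by
    obtain rfl | hya := eq_or_ne y a
    · exact .inr (Subgroup.subset_closure ⟨hy, hab⟩)
    · exact .inl (Subgroup.subset_closure ⟨hy, hya⟩)
  rcases hx with (hx | hx) | rfl
  · exact mem_or hx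
  · simpa only [inv_mem_iff] using mem_or hx
  · exact .inl (one_mem _)

theorem mul_notMem_union_inv_union_one (ha : a ∈ u) (hb : b ∈ u) (hab : a ≠ b)
    (ha_ind : a ∉ Subgroup.closure (u \ {a})) (hb_ind : b ∉ Subgroup.closure (u \ {b})) :
    a * b ∉ u ∪ u⁻¹ ∪ {1} := by
  have hb_mem : b ∈ Subgroup.closure (u \ {a}) := Subgroup.subset_closure ⟨hb, hab.symm⟩
  have ha_mem : a ∈ Subgroup.closure (u \ {b}) := Subgroup.subset_closure ⟨ha, hab⟩
  intro hmem
  rcases mem_closure_sdiff_singleton_or hab hmem with h | h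
  · exact ha_ind ((mul_mem_cancel_right hb_mem).1 h)
  · exact hb_ind ((mul_mem_cancel_left ha_mem).1 h)

theorem subsingleton_of_union_inv_union_one_eq_univ
    (hind : ∀ a ∈ u, a ∉ Subgroup.closure (u \ {a})) (huniv : u ∪ u⁻¹ ∪ {1} = Set.univ) :
    u.Subsingleton := by
  intro a ha b hb
  by_contra hab
  exact mul_notMem_union_inv_union_one ha hb hab (hind a ha) (hind b hb)
    (huniv ▸ Set.mem_univ (a * b))

theorem encard_union_inv_union_one_le {α : Type*} [InvolutiveInv α] [One α] (u : Set α) :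
    (u ∪ u⁻¹ ∪ {1}).encard ≤ 2 * u.encard + 1 :=
  calc (u ∪ u⁻¹ ∪ {1}).encard
    _ ≤ u.encard + u⁻¹.encard + ({1} : Set α).encard := by
      grw [Set.encard_union_le, Set.encard_union_le]
    _ = 2 * u.encard + 1 := by rw [Set.encard_inv, Set.encard_singleton, two_mul]

theorem eq_or_eq_inv_or_eq_one_of_card_le_three (hcard : ENat.card G ≤ 3) (ha : a ≠ 1) (g : G) :
    g = a ∨ g = a⁻¹ ∨ g = 1 := by
  by_contra! ⟨hga, hga', hg⟩
  have hag : a * g ≠ 1 := fun h ↦ hga' (eq_inv_of_mul_eq_one_right h)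
  have hfour : ({1, a, g, a * g} : Set G).encard = 4 := by
    rw [Set.encard_insert_of_notMem (by simp [ha.symm, hg.symm, hag.symm]),
      Set.encard_insert_of_notMem (by simp [hga.symm, hg]),
      Set.encard_pair (by simpa using ha)]
    norm_num
  have hle : (4 : ℕ∞) ≤ 3 := hfour ▸ Set.encard_le_card.trans hcard
  exact absurd hle (by norm_num)

theorem exists_mem_ne_one_of_closure_eq_top [Nontrivial G] (hgen : Subgroup.closure u = ⊤) :
    ∃ a ∈ u, a ≠ 1 := by
  by_contra! h
  exact bot_ne_top ((Subgroup.closure_eq_bot_iff.2 h).symm.trans hgen)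

theorem union_inv_union_one_eq_univ_of_card_le_three (hgen : Subgroup.closure u = ⊤)
    (hcard : ENat.card G ≤ 3) : u ∪ u⁻¹ ∪ {1} = Set.univ := by
  refine Set.eq_univ_of_forall fun g ↦ ?_
  obtain hG | hG := subsingleton_or_nontrivial G
  · exact .inr (Subsingleton.elim g 1)
  obtain ⟨a, hau, ha⟩ := exists_mem_ne_one_of_closure_eq_top hgen
  rcases eq_or_eq_inv_or_eq_one_of_card_le_three hcard ha g with rfl | rfl | rfl
  · exact .inl (.inl hau)
  · exact .inl (.inr (Set.inv_mem_inv.2 hau))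
  · exact .inr rfl

end

/-- If `u` is a minimal generating set of a group `G`, then `u ∪ u⁻¹ ∪ {1} = G`
if and only if `G` is finite of order at most `3`. -/
theorem union_eq_univ_iff_card_le_three
    {G : Type*} [Group G] (u : Set G)
    (hgen : Subgroup.closure u = ⊤)
    (hmin : ∀ v : Set G, v ⊂ u → Subgroup.closure v ≠ ⊤) :
    (u ∪ u⁻¹ ∪ {1} : Set G) = Set.univ ↔ (Finite G ∧ Nat.card G ≤ 3) := by
  have hu : Minimal (Subgroup.closure · = ⊤) u := minimal_iff_forall_lt.2 ⟨hgen, hmin⟩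
  have hcard : ENat.card G ≤ 3 ↔ Finite G ∧ Nat.card G ≤ 3 := by
    rw [← Set.encard_univ, ← Set.finite_univ_iff, ← Set.ncard_univ]
    exact Set.encard_le_coe_iff_finite_ncard_le
  rw [← hcard]
  refine ⟨fun huniv ↦ ?_, union_inv_union_one_eq_univ_of_card_le_three hgen⟩
  have hsub : u.Subsingleton := subsingleton_of_union_inv_union_one_eq_univ
    (fun _ ↦ notMem_closure_sdiff_singleton_of_minimal hu) huniv
  calc ENat.card G
    _ = (u ∪ u⁻¹ ∪ {1}).encard := by rw [huniv, Set.encard_univ]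
    _ ≤ 2 * u.encard + 1 := encard_union_inv_union_one_le u
    _ ≤ 2 * 1 + 1 := by grw [Set.encard_le_one_iff_subsingleton.2 hsub]
    _ = 3 := by norm_num
end
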